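/- (Necessity of the linearizability conditions.) Let U ⊆ ℝ² be open and χ, φ : U → ℝ real-analytic with χ_x φ_y − χ_y φ_x ≡ 1 on U. Let W ⊆ ℝ² be open with W ⊆ U, and let f : W × ℝ → ℝ be real-analytic. Suppose that for every open interval I and every real-analytic solution c : I → ℝ of c''(x) = f(x, c(x), c'(x)) with (x, c(x)) ∈ W for all x ∈ I, the image curve lies on an affine line: there exist (a, b, k) ∈ ℝ³ with (a, b) ≠ (0,0) such that a·χ(x, c(x)) + b·φ(x, c(x)) = k for all x ∈ I. Then there exist real-analytic functions A, B, C, D : W → ℝ such that f(x,y,p) = A(x,y)p³ + 3B(x,y)p² + 3C(x,y)p + D(x,y) on W × ℝ, and D_y − C_x = 2(BD − C²), C_y − B_x = AD − BC, B_y − A_x = 2(AC − B²) hold on W. -/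

import Mathlib

/-- Partial derivative with respect to the first variable of a function on `ℝ²`. -/
noncomputable def pdx (g : ℝ × ℝ → ℝ) (z : ℝ × ℝ) : ℝ := fderiv ℝ g z (1, 0)

/-- Partial derivative with respect to the second variable of a function on `ℝ²`. -/
noncomputable def pdy (g : ℝ × ℝ → ℝ) (z : ℝ × ℝ) : ℝ := fderiv ℝ g z (0, 1)

/-!
If `M` is the Jacobian matrix of `(χ, φ)`, then `det M = 1` forces `M⁻¹ dM` to be trace free, and
equality of mixed second derivatives leaves only four independent entries:
`M⁻¹ dM = [[C, B], [-D, -C]] dx + [[B, A], [-C, -B]] dy`. Hence `χ`, `φ` and all their linear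
combinations solve one linear second order system, whose level curves satisfy
`y'' = A y'³ + 3 B y'² + 3 C y' + D`. Since a solution of `y'' = f(x, y, y')` with arbitrary initial
data lies on such a level curve, `f` is this cubic. The system has two solutions with independent
gradients, so its integrability conditions hold identically; these are the three equations for
`A, B, C, D`.

The solutions used must be analytic. An integral curve `γ` of an analytic vector field `v` is, after
rescaling to `w t = γ (t₀ + ε t)` on the unit interval, a solution of `w = γ t₀ + ε ∫ v(w)` in a
space of continuous functions, where the analytic implicit function theorem makes `w` an analytic
function of `ε`.
-/

open Filter Set
open scoped Topology ContDiff

section Superposition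

variable {𝕜 K E F : Type*} [NontriviallyNormedField 𝕜] [TopologicalSpace K] [CompactSpace K]
  [NormedAddCommGroup E] [NormedSpace 𝕜 E] [NormedAddCommGroup F] [NormedSpace 𝕜 F]

/-- The superposition operator of a continuous multilinear map `p`: it sends a family of continuous
functions `mᵢ` on a compact space to the function `t ↦ p (mᵢ t)ᵢ`. These operators are the
coefficients of the power series of the superposition operator of an analytic map. -/
noncomputable def multilinearSuperposition {ι : Type*} [Fintype ι]
    (p : ContinuousMultilinearMap 𝕜 (fun _ : ι => E) F) :
    ContinuousMultilinearMap 𝕜 (fun _ : ι => C(K, E)) C(K, F) :=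
  MultilinearMap.mkContinuous
    { toFun := fun m => ⟨fun t => p fun i => m i t, by fun_prop⟩
      map_update_add' := by
        intro _ m i x y
        ext t
        exact (p.compContinuousLinearMap fun _ => ContinuousMap.evalCLM 𝕜 t).map_update_add m i x y
      map_update_smul' := by
        intro _ m i c x
        ext t
        exact (p.compContinuousLinearMap fun _ =>
          ContinuousMap.evalCLM 𝕜 t).map_update_smul m i c x }
    ‖p‖ fun m => by
      refine (ContinuousMap.norm_le _ (by positivity)).2 fun t => (p.le_opNorm _).trans ?_
      gcongr with i
      exact (m i).norm_coe_le_norm t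

lemma norm_multilinearSuperposition_le {ι : Type*} [Fintype ι]
    (p : ContinuousMultilinearMap 𝕜 (fun _ : ι => E) F) :
    ‖multilinearSuperposition (K := K) p‖ ≤ ‖p‖ :=
  MultilinearMap.mkContinuous_norm_le _ (norm_nonneg _) _

lemma radius_le_radius_multilinearSuperposition (p : FormalMultilinearSeries 𝕜 E F) :
    p.radius ≤ FormalMultilinearSeries.radius
      (fun n => multilinearSuperposition (K := K) (p n) :
        FormalMultilinearSeries 𝕜 C(K, E) C(K, F)) := by
  refine ENNReal.le_of_forall_nnreal_lt fun s hs => ?_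
  obtain ⟨C, -, hC⟩ := p.norm_mul_pow_le_of_lt_radius hs
  refine FormalMultilinearSeries.le_radius_of_bound _ C fun n => le_trans ?_ (hC n)
  gcongr
  exact norm_multilinearSuperposition_le _

theorem exists_analyticAt_superposition [CompleteSpace F] {g : E → F} {x : E}
    (hg : AnalyticAt 𝕜 g x) :
    ∃ N : C(K, E) → C(K, F), AnalyticAt 𝕜 N (.const K x) ∧
      ∀ᶠ w in 𝓝 (.const K x), ∀ t, N w t = g (w t) := by
  obtain ⟨p, r, hp⟩ := hg
  let q : FormalMultilinearSeries 𝕜 C(K, E) C(K, F) := fun n => multilinearSuperposition (p n)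
  have hr : r ≤ q.radius := hp.r_le.trans (radius_le_radius_multilinearSuperposition p)
  have hq : HasFPowerSeriesOnBall q.sum q 0 r :=
    (q.hasFPowerSeriesOnBall (hp.r_pos.trans_le hr)).mono hp.r_pos hr
  refine ⟨fun w => q.sum (w - .const K x), ?_, ?_⟩
  · simpa only [zero_add] using (hq.comp_sub (.const K x)).analyticAt
  filter_upwards [Metric.eball_mem_nhds _ hp.r_pos] with w hw t
  have hwt : ‖w t - x‖ₑ ≤ ‖w - .const K x‖ₑ :=
    enorm_le_iff_norm_le.2 ((w - .const K x).norm_coe_le_norm t)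
  rw [Metric.mem_eball, edist_eq_enorm_sub] at hw
  have hsum_q := (ContinuousMap.evalCLM 𝕜 t).hasSum (hq.hasSum (y := w - .const K x) (by simpa))
  have hsum_p := hp.hasSum (y := w t - x) (by simpa using hwt.trans_lt hw)
  simpa using hsum_q.unique hsum_p

end Superposition

section ProductCurve

variable {𝕜 E F : Type*} [NontriviallyNormedField 𝕜] [NormedAddCommGroup E] [NormedSpace 𝕜 E]
  [NormedAddCommGroup F] [NormedSpace 𝕜 F] {γ : 𝕜 → E × F} {v : E × F} {t : 𝕜}

lemma hasDerivAt_fst_comp (hγ : HasDerivAt γ v t) : HasDerivAt (fun s => (γ s).1) v.1 t :=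
  (ContinuousLinearMap.fst 𝕜 E F).hasFDerivAt.comp_hasDerivAt t hγ

lemma hasDerivAt_snd_comp (hγ : HasDerivAt γ v t) : HasDerivAt (fun s => (γ s).2) v.2 t :=
  (ContinuousLinearMap.snd 𝕜 E F).hasFDerivAt.comp_hasDerivAt t hγ

end ProductCurve

section IntegralCurve

open scoped unitInterval

lemma eventually_forall_unitInterval {p : ℝ → Prop} {t₀ : ℝ} (hp : ∀ᶠ s in 𝓝 t₀, p s) :
    ∀ᶠ ε in 𝓝 (0 : ℝ), ∀ t : I, p (t₀ + ε * t) := by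
  have h_tendsto (t : I) : Tendsto (fun q : ℝ × I => t₀ + q.1 * q.2) (𝓝 (0, t)) (𝓝 t₀) := by
    have : Continuous fun q : ℝ × I => t₀ + q.1 * q.2 := by fun_prop
    simpa using this.tendsto (0, t)
  have h_univ := isCompact_univ.eventually_forall_of_forall_eventually
    (P := fun ε (t : I) => p (t₀ + ε * t)) fun t _ => (h_tendsto t).eventually hp
  simpa using h_univ

lemma eventually_exists_mem_rescaling {X : Type*} [PseudoMetricSpace X] {γ : ℝ → X} {t₀ : ℝ}
    (hγ : ∀ᶠ s in 𝓝 t₀, ContinuousAt γ s) {S : Set C(I, X)}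
    (hS : S ∈ 𝓝 (ContinuousMap.const I (γ t₀))) :
    ∀ᶠ ε in 𝓝 (0 : ℝ), ∃ w ∈ S, ∀ t : I, w t = γ (t₀ + ε * t) := by
  obtain ⟨r, hr, hrS⟩ := Metric.mem_nhds_iff.1 hS
  have hγ_ball : ∀ᶠ s in 𝓝 t₀, γ s ∈ Metric.ball (γ t₀) r :=
    hγ.self_of_nhds (Metric.ball_mem_nhds _ hr)
  filter_upwards [eventually_forall_unitInterval hγ, eventually_forall_unitInterval hγ_ball]
    with ε hcont hball
  have h_continuous : Continuous fun t : I => γ (t₀ + ε * t) :=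
    continuous_iff_continuousAt.2 fun t =>
      (hcont t).comp (f := fun t : I => t₀ + ε * (t : ℝ)) (by fun_prop)
  exact ⟨⟨_, h_continuous⟩, hrS ((ContinuousMap.dist_lt_iff hr).2 hball), fun _ => rfl⟩

variable {E : Type*} [NormedAddCommGroup E] [NormedSpace ℝ E]

/-- The Volterra operator `w ↦ ∫₀ᵗ w` on continuous functions on the unit interval, used to write
an initial value problem as a fixed point equation. -/
noncomputable def volterra : C(I, E) →L[ℝ] C(I, E) :=
  LinearMap.mkContinuous
    { toFun := fun w =>
        ⟨fun t => ∫ s in (0 : ℝ)..t, IccExtend zero_le_one w s,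
          (intervalIntegral.continuous_primitive
            (fun a b => w.continuous.Icc_extend'.intervalIntegrable a b) 0).comp
              continuous_subtype_val⟩
      map_add' := by
        intro u w
        ext t
        exact intervalIntegral.integral_add (u.continuous.Icc_extend'.intervalIntegrable _ _)
          (w.continuous.Icc_extend'.intervalIntegrable _ _)
      map_smul' := by
        intro c w
        ext t
        exact intervalIntegral.integral_smul c _ }
    1 fun w => by
      refine (ContinuousMap.norm_le _ (by positivity)).2 fun t => ?_
      calc ‖∫ s in (0 : ℝ)..t, IccExtend zero_le_one w s‖ ≤ ‖w‖ * |(t : ℝ) - 0| :=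
            intervalIntegral.norm_integral_le_of_norm_le_const fun s _ => w.norm_coe_le_norm _
        _ ≤ ‖w‖ * 1 := by
            gcongr
            rw [sub_zero, abs_of_nonneg t.2.1]
            exact t.2.2
        _ = 1 * ‖w‖ := mul_comm _ _

lemma volterra_apply (w : C(I, E)) (t : I) :
    volterra w t = ∫ s in (0 : ℝ)..t, IccExtend zero_le_one w s :=
  rfl

variable [CompleteSpace E]

theorem exists_analyticAt_eq_add_smul_iff {T : E → E} {x : E} (hT : AnalyticAt ℝ T x) :
    ∃ ψ : ℝ → E, AnalyticAt ℝ ψ 0 ∧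
      ∀ᶠ u : ℝ × E in 𝓝 (0, x), u.2 = x + u.1 • T u.2 ↔ ψ u.1 = u.2 := by
  let G : ℝ × E → E := fun u => u.2 - u.1 • T u.2
  have hG : AnalyticAt ℝ G (0, x) :=
    analyticAt_snd.sub (analyticAt_fst.smul (hT.comp_of_eq analyticAt_snd rfl))
  have hG_deriv : fderiv ℝ G (0, x) ∘L .inr ℝ ℝ E = .id ℝ E := by
    have h_comp : HasFDerivAt (fun w => G (0, w)) (fderiv ℝ G (0, x) ∘L .inr ℝ ℝ E) x :=
      hG.differentiableAt.hasFDerivAt.comp x (hasFDerivAt_prodMk_right 0 x)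
    have h_id : (fun w => G (0, w)) = id := by
      funext w
      simp [G]
    exact h_comp.unique (h_id ▸ hasFDerivAt_id x)
  have hinv : (fderiv ℝ G (0, x) ∘L .inr ℝ ℝ E).IsInvertible := by
    rw [hG_deriv]
    exact ⟨.refl ℝ E, rfl⟩
  have hGω : ContDiffAt ℝ ω G (0, x) := hG.contDiffAt
  have hω : (ω : ℕ∞ω) ≠ 0 := by simp
  refine ⟨hGω.implicitFunction hω hinv,
    (hGω.contDiffAt_implicitFunction hω hinv).analyticAt, ?_⟩
  filter_upwards [hGω.eventually_apply_eq_iff_implicitFunction hω hinv] with u hu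
  rw [← hu, ← sub_eq_iff_eq_add]
  simp [G]

lemma eq_const_add_smul_volterra {γ : ℝ → E} {t₀ ε : ℝ} {w u : C(I, E)}
    (hw : ∀ t : I, w t = γ (t₀ + ε * t)) (hγ : ∀ t : I, HasDerivAt γ (u t) (t₀ + ε * t)) :
    w = .const I (γ t₀) + ε • volterra u := by
  ext t
  have hderiv : ∀ s ∈ uIcc 0 (t : ℝ),
      HasDerivAt (fun s => γ (t₀ + ε * s)) (ε • IccExtend zero_le_one u s) s := by
    intro s hs
    rw [uIcc_of_le t.2.1] at hs
    have hsI : s ∈ I := ⟨hs.1, hs.2.trans t.2.2⟩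
    rw [IccExtend_of_mem _ _ hsI]
    have h_affine : HasDerivAt (fun s => t₀ + ε * s) ε s := by
      simpa using ((hasDerivAt_id s).const_mul ε).const_add t₀
    exact (hγ ⟨s, hsI⟩).scomp s h_affine
  have hint := intervalIntegral.integral_eq_sub_of_hasDerivAt hderiv
    ((u.continuous.Icc_extend'.const_smul ε).intervalIntegrable _ _)
  rw [intervalIntegral.integral_smul, mul_zero, add_zero, ← hw t] at hint
  simp [volterra_apply, hint]

theorem analyticAt_of_isIntegralCurveAt {v : E → E} {γ : ℝ → E} {t₀ : ℝ}
    (hγ : IsIntegralCurveAt γ (fun _ => v) t₀) (hv : AnalyticAt ℝ v (γ t₀)) :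
    AnalyticAt ℝ γ t₀ := by
  obtain ⟨N, hN, hNv⟩ := exists_analyticAt_superposition (K := I) hv
  obtain ⟨ψ, hψ, hψ_iff⟩ := exists_analyticAt_eq_add_smul_iff
    (((volterra : C(I, E) →L[ℝ] C(I, E)).analyticAt _).comp hN)
  obtain ⟨P, hP, S, hS, hPS⟩ := mem_nhds_prod_iff.1 hψ_iff
  have hψ_eq : ∀ᶠ ε in 𝓝 0, ψ ε 1 = γ (t₀ + ε) := by
    filter_upwards [hP, eventually_forall_unitInterval hγ,
      eventually_exists_mem_rescaling (hγ.mono fun _ h => h.continuousAt) (inter_mem hS hNv)]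
      with ε hε hderiv ⟨w, ⟨hwS, hwN⟩, hw⟩
    have hw_fixed : w = .const I (γ t₀) + ε • volterra (N w) :=
      eq_const_add_smul_volterra hw fun t => by simpa only [hwN t, hw t] using hderiv t
    have hψw : ψ ε = w := (hPS (mk_mem_prod hε hwS)).1 hw_fixed
    rw [hψw, hw, Icc.coe_one, mul_one]
  have hψ_one : AnalyticAt ℝ (fun ε => ψ ε 1) 0 :=
    ((ContinuousMap.evalCLM ℝ (1 : I)).analyticAt (ψ 0)).fun_comp hψ
  simpa using (hψ_one.congr hψ_eq).comp_sub t₀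

lemma eventually_eq_self_of_hasDerivAt_one {τ : ℝ → ℝ} {t₀ : ℝ}
    (hτ : ∀ᶠ t in 𝓝 t₀, HasDerivAt τ 1 t) (hτ₀ : τ t₀ = t₀) : ∀ᶠ t in 𝓝 t₀, τ t = t := by
  obtain ⟨r, hr, hball⟩ := Metric.eventually_nhds_iff_ball.1 hτ
  have h_eqOn : EqOn τ id (Metric.ball t₀ r) :=
    Metric.isOpen_ball.eqOn_of_deriv_eq (convex_ball t₀ r).isPreconnected
      (fun t ht => (hball t ht).differentiableAt.differentiableWithinAt) differentiableOn_id
      (fun t ht => by simp [(hball t ht).deriv]) (Metric.mem_ball_self hr) hτ₀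
  exact h_eqOn.eventuallyEq_of_mem (Metric.ball_mem_nhds t₀ hr)

theorem exists_analyticAt_deriv_deriv_eq {f : ℝ × E × E → E} {x₀ : ℝ} {y₀ p₀ : E}
    (hf : AnalyticAt ℝ f (x₀, y₀, p₀)) :
    ∃ c : ℝ → E, AnalyticAt ℝ c x₀ ∧ c x₀ = y₀ ∧ deriv c x₀ = p₀ ∧
      ∀ᶠ x in 𝓝 x₀, deriv (deriv c) x = f (x, c x, deriv c x) := by
  let v : ℝ × E × E → ℝ × E × E := fun u => (1, u.2.2, f u)
  have hv : AnalyticAt ℝ v (x₀, y₀, p₀) :=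
    analyticAt_const.prod ((analyticAt_snd.comp analyticAt_snd).prod hf)
  obtain ⟨γ, hγ₀, r, hr, hγ_deriv⟩ :=
    hv.contDiffAt.exists_forall_mem_closedBall_exists_eq_forall_mem_Ioo_hasDerivAt₀ x₀
  have hγ : ∀ᶠ x in 𝓝 x₀, HasDerivAt γ (v (γ x)) x :=
    eventually_of_mem (Ioo_mem_nhds (sub_lt_self x₀ hr) (lt_add_of_pos_right x₀ hr)) hγ_deriv
  have hγ_analytic : AnalyticAt ℝ γ x₀ := analyticAt_of_isIntegralCurveAt (v := v) hγ (hγ₀ ▸ hv)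
  have h_time : ∀ᶠ x in 𝓝 x₀, (γ x).1 = x :=
    eventually_eq_self_of_hasDerivAt_one (hγ.mono fun _ hx => hasDerivAt_fst_comp hx)
      (by rw [hγ₀])
  have hγ_snd : ∀ᶠ x in 𝓝 x₀, HasDerivAt (fun x => (γ x).2) ((γ x).2.2, f (γ x)) x :=
    hγ.mono fun _ hx => hasDerivAt_snd_comp hx
  have h_slope : ∀ᶠ x in 𝓝 x₀, deriv (fun x => (γ x).2.1) x = (γ x).2.2 :=
    hγ_snd.mono fun _ hx => (hasDerivAt_fst_comp hx).deriv
  refine ⟨fun x => (γ x).2.1, analyticAt_fst.comp (analyticAt_snd.comp hγ_analytic), by simp [hγ₀],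
    by simp [h_slope.self_of_nhds, hγ₀], ?_⟩
  filter_upwards [h_time, hγ_snd, h_slope.eventually_nhds] with x hx_time hx_snd hx_slope
  calc deriv (deriv fun x => (γ x).2.1) x = deriv (fun x => (γ x).2.2) x :=
        EventuallyEq.deriv_eq hx_slope
    _ = f (γ x) := (hasDerivAt_snd_comp hx_snd).deriv
    _ = f (x, (γ x).2.1, deriv (fun x => (γ x).2.1) x) := by
        rw [hx_slope.self_of_nhds]
        nth_rw 2 [← hx_time]

end IntegralCurve

section PartialDerivatives

variable {g h a b c d : ℝ × ℝ → ℝ} {U : Set (ℝ × ℝ)} {z : ℝ × ℝ}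

lemma pdx_congr (hgh : g =ᶠ[𝓝 z] h) : pdx g z = pdx h z := by
  rw [pdx, pdx, hgh.fderiv_eq]

lemma pdy_congr (hgh : g =ᶠ[𝓝 z] h) : pdy g z = pdy h z := by
  rw [pdy, pdy, hgh.fderiv_eq]

lemma pdx_const (k : ℝ) : pdx (fun _ => k) z = 0 := by
  simp [pdx]

lemma pdy_const (k : ℝ) : pdy (fun _ => k) z = 0 := by
  simp [pdy]

lemma pdx_mul_sub_mul (ha : DifferentiableAt ℝ a z) (hb : DifferentiableAt ℝ b z)
    (hc : DifferentiableAt ℝ c z) (hd : DifferentiableAt ℝ d z) :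
    pdx (fun w => a w * b w - c w * d w) z =
      pdx a z * b z + a z * pdx b z - (pdx c z * d z + c z * pdx d z) := by
  simp only [pdx, fderiv_fun_sub (ha.fun_mul hb) (hc.fun_mul hd), fderiv_fun_mul ha hb,
    fderiv_fun_mul hc hd, sub_apply, add_apply, smul_apply, smul_eq_mul]
  ring

lemma pdy_mul_sub_mul (ha : DifferentiableAt ℝ a z) (hb : DifferentiableAt ℝ b z)
    (hc : DifferentiableAt ℝ c z) (hd : DifferentiableAt ℝ d z) :
    pdy (fun w => a w * b w - c w * d w) z =
      pdy a z * b z + a z * pdy b z - (pdy c z * d z + c z * pdy d z) := by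
  simp only [pdy, fderiv_fun_sub (ha.fun_mul hb) (hc.fun_mul hd), fderiv_fun_mul ha hb,
    fderiv_fun_mul hc hd, sub_apply, add_apply, smul_apply, smul_eq_mul]
  ring

lemma pdx_const_mul_add_const_mul (hg : DifferentiableAt ℝ g z) (hh : DifferentiableAt ℝ h z)
    (k l : ℝ) : pdx (fun w => k * g w + l * h w) z = k * pdx g z + l * pdx h z := by
  simp [pdx, fderiv_fun_add (hg.const_mul k) (hh.const_mul l), fderiv_const_mul hg,
    fderiv_const_mul hh]

lemma pdy_const_mul_add_const_mul (hg : DifferentiableAt ℝ g z) (hh : DifferentiableAt ℝ h z)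
    (k l : ℝ) : pdy (fun w => k * g w + l * h w) z = k * pdy g z + l * pdy h z := by
  simp [pdy, fderiv_fun_add (hg.const_mul k) (hh.const_mul l), fderiv_const_mul hg,
    fderiv_const_mul hh]

lemma analyticAt_pdx (hg : AnalyticAt ℝ g z) : AnalyticAt ℝ (pdx g) z :=
  ((ContinuousLinearMap.apply ℝ ℝ ((1 : ℝ), (0 : ℝ))).analyticAt _).fun_comp hg.fderiv

lemma analyticAt_pdy (hg : AnalyticAt ℝ g z) : AnalyticAt ℝ (pdy g) z :=
  ((ContinuousLinearMap.apply ℝ ℝ ((0 : ℝ), (1 : ℝ))).analyticAt _).fun_comp hg.fderiv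

lemma analyticOnNhd_pdx (hg : AnalyticOnNhd ℝ g U) : AnalyticOnNhd ℝ (pdx g) U :=
  fun z hz => analyticAt_pdx (hg z hz)

lemma analyticOnNhd_pdy (hg : AnalyticOnNhd ℝ g U) : AnalyticOnNhd ℝ (pdy g) U :=
  fun z hz => analyticAt_pdy (hg z hz)

lemma pdx_pdy_comm (hg : AnalyticAt ℝ g z) : pdx (pdy g) z = pdy (pdx g) z := by
  have h_apply (v w : ℝ × ℝ) :
      fderiv ℝ (fun z => fderiv ℝ g z v) z w = fderiv ℝ (fderiv ℝ g) z w v := by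
    simp [fderiv_clm_apply hg.fderiv.differentiableAt (differentiableAt_const v)]
  have h_symm := (ContDiffAt.isSymmSndFDerivAt_of_omega hg.contDiffAt).eq (1, 0) (0, 1)
  rwa [← h_apply, ← h_apply] at h_symm

lemma hasDerivAt_comp_graph {y : ℝ → ℝ} {x p : ℝ} (hg : DifferentiableAt ℝ g (x, y x))
    (hy : HasDerivAt y p x) :
    HasDerivAt (fun t => g (t, y t)) (pdx g (x, y x) + p * pdy g (x, y x)) x := by
  have h_tangent : ((1 : ℝ), p) = (1, 0) + p • ((0 : ℝ), (1 : ℝ)) := by simp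
  have h_comp := hg.hasFDerivAt.comp_hasDerivAt x ((hasDerivAt_id x).prodMk hy)
  rwa [h_tangent, map_add, map_smul] at h_comp

lemma pdx_add_deriv_mul_pdy_eq_zero {y : ℝ → ℝ} {x k : ℝ} (hg : DifferentiableAt ℝ g (x, y x))
    (hy : DifferentiableAt ℝ y x) (h_level : ∀ᶠ t in 𝓝 x, g (t, y t) = k) :
    pdx g (x, y x) + deriv y x * pdy g (x, y x) = 0 :=
  (hasDerivAt_comp_graph hg hy.hasDerivAt).unique
    ((hasDerivAt_const x k).congr_of_eventuallyEq h_level)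

lemma second_deriv_along_level_curve_eq_zero {y : ℝ → ℝ} {x k : ℝ}
    (hg : AnalyticAt ℝ g (x, y x)) (hy : AnalyticAt ℝ y x)
    (h_level : ∀ᶠ t in 𝓝 x, g (t, y t) = k) :
    pdx (pdx g) (x, y x) + 2 * deriv y x * pdy (pdx g) (x, y x)
      + deriv y x ^ 2 * pdy (pdy g) (x, y x) + deriv (deriv y) x * pdy g (x, y x) = 0 := by
  have h_graph : ContinuousAt (fun t => (t, y t)) x := continuousAt_id.prodMk hy.continuousAt
  have h_first : ∀ᶠ t in 𝓝 x, pdx g (t, y t) + deriv y t * pdy g (t, y t) = 0 := by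
    filter_upwards [h_level.eventually_nhds, hy.eventually_analyticAt,
      h_graph.eventually hg.eventually_analyticAt] with t ht hyt hgt
    exact pdx_add_deriv_mul_pdy_eq_zero hgt.differentiableAt hyt.differentiableAt ht
  have h_pdx : HasDerivAt (fun t => pdx g (t, y t)) _ x :=
    hasDerivAt_comp_graph (analyticAt_pdx hg).differentiableAt
      hy.differentiableAt.hasDerivAt
  have h_pdy : HasDerivAt (fun t => pdy g (t, y t)) _ x :=
    hasDerivAt_comp_graph (analyticAt_pdy hg).differentiableAt
      hy.differentiableAt.hasDerivAt
  have h_second := (h_pdx.add (hy.deriv.differentiableAt.hasDerivAt.mul h_pdy)).unique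
    ((hasDerivAt_const x 0).congr_of_eventuallyEq h_first)
  rw [pdx_pdy_comm hg] at h_second
  linear_combination h_second

end PartialDerivatives

lemma eq_zero_of_det_ne_zero {R : Type*} [CommRing R] [NoZeroDivisors R] {p q r s u v : R}
    (hdet : p * s - q * r ≠ 0) (h₁ : u * p + v * q = 0) (h₂ : u * r + v * s = 0) :
    u = 0 ∧ v = 0 := by
  constructor
  · refine (mul_eq_zero.1 ?_).resolve_right hdet
    linear_combination s * h₁ - q * h₂
  · refine (mul_eq_zero.1 ?_).resolve_right hdet
    linear_combination p * h₂ - r * h₁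

/-- `g` is an affine function on `U` for the projective connection with coefficients `A, B, C, D`,
that is, its covariant Hessian vanishes. The sign conventions are those for which the level curves
of affine functions satisfy `y'' = A y'³ + 3 B y'² + 3 C y' + D`. -/
structure IsAffineFunctionOn (A B C D g : ℝ × ℝ → ℝ) (U : Set (ℝ × ℝ)) : Prop where
  pdx_pdx : ∀ z ∈ U, pdx (pdx g) z = C z * pdx g z - D z * pdy g z
  pdy_pdx : ∀ z ∈ U, pdy (pdx g) z = B z * pdx g z - C z * pdy g z
  pdy_pdy : ∀ z ∈ U, pdy (pdy g) z = A z * pdx g z - B z * pdy g z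

section AffineFunctions

variable {A B C D g χ φ : ℝ × ℝ → ℝ} {U : Set (ℝ × ℝ)}

theorem exists_isAffineFunctionOn_of_jacobian_eq_one (hU : IsOpen U) (hχ : AnalyticOnNhd ℝ χ U)
    (hφ : AnalyticOnNhd ℝ φ U) (hJ : ∀ z ∈ U, pdx χ z * pdy φ z - pdy χ z * pdx φ z = 1) :
    ∃ A B C D : ℝ × ℝ → ℝ,
      (AnalyticOnNhd ℝ A U ∧ AnalyticOnNhd ℝ B U ∧ AnalyticOnNhd ℝ C U ∧ AnalyticOnNhd ℝ D U) ∧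
      IsAffineFunctionOn A B C D χ U ∧ IsAffineFunctionOn A B C D φ U := by
  have hχx := analyticOnNhd_pdx hχ
  have hχy := analyticOnNhd_pdy hχ
  have hφx := analyticOnNhd_pdx hφ
  have hφy := analyticOnNhd_pdy hφ
  have hJx (z) (hz : z ∈ U) : pdx (pdx χ) z * pdy φ z + pdx χ z * pdy (pdx φ) z
      - (pdy (pdx χ) z * pdx φ z + pdy χ z * pdx (pdx φ) z) = 0 := by
    rw [← pdx_pdy_comm (hχ z hz), ← pdx_pdy_comm (hφ z hz), ← pdx_mul_sub_mul
      (hχx z hz).differentiableAt (hφy z hz).differentiableAt (hχy z hz).differentiableAt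
      (hφx z hz).differentiableAt, pdx_congr (eventually_of_mem (hU.mem_nhds hz) hJ), pdx_const]
  have hJy (z) (hz : z ∈ U) : pdy (pdx χ) z * pdy φ z + pdx χ z * pdy (pdy φ) z
      - (pdy (pdy χ) z * pdx φ z + pdy χ z * pdy (pdx φ) z) = 0 := by
    rw [← pdy_mul_sub_mul (hχx z hz).differentiableAt (hφy z hz).differentiableAt
      (hχy z hz).differentiableAt (hφx z hz).differentiableAt,
      pdy_congr (eventually_of_mem (hU.mem_nhds hz) hJ), pdy_const]
  refine ⟨fun z => pdy φ z * pdy (pdy χ) z - pdy χ z * pdy (pdy φ) z,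
    fun z => pdy φ z * pdy (pdx χ) z - pdy χ z * pdy (pdx φ) z,
    fun z => pdy φ z * pdx (pdx χ) z - pdy χ z * pdx (pdx φ) z,
    fun z => pdx φ z * pdx (pdx χ) z - pdx χ z * pdx (pdx φ) z, ⟨?_, ?_, ?_, ?_⟩,
    ⟨fun z hz => ?_, fun z hz => ?_, fun z hz => ?_⟩,
    ⟨fun z hz => ?_, fun z hz => ?_, fun z hz => ?_⟩⟩
  · exact (hφy.mul (analyticOnNhd_pdy hχy)).sub (hχy.mul (analyticOnNhd_pdy hφy))
  · exact (hφy.mul (analyticOnNhd_pdy hχx)).sub (hχy.mul (analyticOnNhd_pdy hφx))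
  · exact (hφy.mul (analyticOnNhd_pdx hχx)).sub (hχy.mul (analyticOnNhd_pdx hφx))
  · exact (hφx.mul (analyticOnNhd_pdx hχx)).sub (hχx.mul (analyticOnNhd_pdx hφx))
  · linear_combination -pdx (pdx χ) z * hJ z hz
  · linear_combination -pdy (pdx χ) z * hJ z hz + pdy χ z * hJx z hz
  · linear_combination -pdy (pdy χ) z * hJ z hz + pdy χ z * hJy z hz
  · linear_combination -pdx (pdx φ) z * hJ z hz
  · linear_combination -pdy (pdx φ) z * hJ z hz + pdy φ z * hJx z hz
  · linear_combination -pdy (pdy φ) z * hJ z hz + pdy φ z * hJy z hz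

namespace IsAffineFunctionOn

lemma const_mul_add_const_mul (hU : IsOpen U) (hχ : AnalyticOnNhd ℝ χ U)
    (hφ : AnalyticOnNhd ℝ φ U) (hχ_affine : IsAffineFunctionOn A B C D χ U)
    (hφ_affine : IsAffineFunctionOn A B C D φ U) (a b : ℝ) :
    IsAffineFunctionOn A B C D (fun z => a * χ z + b * φ z) U := by
  have h_pdx : EqOn (pdx fun w => a * χ w + b * φ w) (fun w => a * pdx χ w + b * pdx φ w) U :=
    fun z hz => pdx_const_mul_add_const_mul (hχ z hz).differentiableAt
      (hφ z hz).differentiableAt a b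
  have h_pdy : EqOn (pdy fun w => a * χ w + b * φ w) (fun w => a * pdy χ w + b * pdy φ w) U :=
    fun z hz => pdy_const_mul_add_const_mul (hχ z hz).differentiableAt
      (hφ z hz).differentiableAt a b
  constructor <;> intro z hz
  · rw [pdx_congr (h_pdx.eventuallyEq_of_mem (hU.mem_nhds hz)), h_pdx hz, h_pdy hz,
      pdx_const_mul_add_const_mul (analyticAt_pdx (hχ z hz)).differentiableAt
        (analyticAt_pdx (hφ z hz)).differentiableAt]
    linear_combination a * hχ_affine.pdx_pdx z hz + b * hφ_affine.pdx_pdx z hz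
  · rw [pdy_congr (h_pdx.eventuallyEq_of_mem (hU.mem_nhds hz)), h_pdx hz, h_pdy hz,
      pdy_const_mul_add_const_mul (analyticAt_pdx (hχ z hz)).differentiableAt
        (analyticAt_pdx (hφ z hz)).differentiableAt]
    linear_combination a * hχ_affine.pdy_pdx z hz + b * hφ_affine.pdy_pdx z hz
  · rw [pdy_congr (h_pdy.eventuallyEq_of_mem (hU.mem_nhds hz)), h_pdx hz, h_pdy hz,
      pdy_const_mul_add_const_mul (analyticAt_pdy (hχ z hz)).differentiableAt
        (analyticAt_pdy (hφ z hz)).differentiableAt]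
    linear_combination a * hχ_affine.pdy_pdy z hz + b * hφ_affine.pdy_pdy z hz

theorem deriv_deriv_level_curve (hg_affine : IsAffineFunctionOn A B C D g U) {y : ℝ → ℝ}
    {x k : ℝ} (hxU : (x, y x) ∈ U) (hg : AnalyticAt ℝ g (x, y x)) (hy : AnalyticAt ℝ y x)
    (h_level : ∀ᶠ t in 𝓝 x, g (t, y t) = k)
    (h_grad : ¬(pdx g (x, y x) = 0 ∧ pdy g (x, y x) = 0)) :
    deriv (deriv y) x = A (x, y x) * deriv y x ^ 3 + 3 * B (x, y x) * deriv y x ^ 2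
      + 3 * C (x, y x) * deriv y x + D (x, y x) := by
  have h_first := pdx_add_deriv_mul_pdy_eq_zero hg.differentiableAt hy.differentiableAt h_level
  have h_second := second_deriv_along_level_curve_eq_zero hg hy h_level
  rw [hg_affine.pdx_pdx _ hxU, hg_affine.pdy_pdx _ hxU, hg_affine.pdy_pdy _ hxU] at h_second
  have h_pdy : pdy g (x, y x) ≠ 0 := fun h => h_grad ⟨by simpa [h] using h_first, h⟩
  refine mul_right_cancel₀ h_pdy ?_
  linear_combination h_second - (C (x, y x) + 2 * deriv y x * B (x, y x)
    + deriv y x ^ 2 * A (x, y x)) * h_first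

/-- Equality of the mixed third derivatives of an affine function. -/
lemma compatibility (hU : IsOpen U) (hg : AnalyticOnNhd ℝ g U)
    (hg_affine : IsAffineFunctionOn A B C D g U) {z : ℝ × ℝ} (hz : z ∈ U)
    (hA : DifferentiableAt ℝ A z) (hB : DifferentiableAt ℝ B z) (hC : DifferentiableAt ℝ C z)
    (hD : DifferentiableAt ℝ D z) :
    (pdy C z - pdx B z - (A z * D z - B z * C z)) * pdx g z
        + -(pdy D z - pdx C z - 2 * (B z * D z - C z ^ 2)) * pdy g z = 0 ∧
      (pdy B z - pdx A z - 2 * (A z * C z - B z ^ 2)) * pdx g z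
        + -(pdy C z - pdx B z - (A z * D z - B z * C z)) * pdy g z = 0 := by
  have hgx := (analyticAt_pdx (hg z hz)).differentiableAt
  have hgy := (analyticAt_pdy (hg z hz)).differentiableAt
  have hUz := hU.mem_nhds hz
  have hxx := hg_affine.pdx_pdx z hz
  have hxy := hg_affine.pdy_pdx z hz
  have hyx := (pdx_pdy_comm (hg z hz)).trans hxy
  have hyy := hg_affine.pdy_pdy z hz
  have hxxy := pdx_pdy_comm (analyticAt_pdx (hg z hz))
  rw [pdx_congr (eventually_of_mem hUz hg_affine.pdy_pdx),
    pdy_congr (eventually_of_mem hUz hg_affine.pdx_pdx), pdx_mul_sub_mul hB hgx hC hgy,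
    pdy_mul_sub_mul hC hgx hD hgy, hxx, hxy, hyx, hyy] at hxxy
  have hyxy := pdx_pdy_comm (analyticAt_pdy (hg z hz))
  have h_pdy_pdx_pdy : pdx (pdy g) =ᶠ[𝓝 z] fun w => B w * pdx g w - C w * pdy g w :=
    eventually_of_mem hUz fun w hw => (pdx_pdy_comm (hg w hw)).trans (hg_affine.pdy_pdx w hw)
  rw [pdx_congr (eventually_of_mem hUz hg_affine.pdy_pdy), pdy_congr h_pdy_pdx_pdy,
    pdx_mul_sub_mul hA hgx hB hgy, pdy_mul_sub_mul hB hgx hC hgy, hxx, hxy, hyx, hyy] at hyxy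
  constructor
  · linear_combination -hxxy
  · linear_combination -hyxy

end IsAffineFunctionOn

theorem coefficient_equations_of_isAffineFunctionOn (hU : IsOpen U) (hχ : AnalyticOnNhd ℝ χ U)
    (hφ : AnalyticOnNhd ℝ φ U) (hχ_affine : IsAffineFunctionOn A B C D χ U)
    (hφ_affine : IsAffineFunctionOn A B C D φ U) {z : ℝ × ℝ} (hz : z ∈ U)
    (hJ : pdx χ z * pdy φ z - pdy χ z * pdx φ z ≠ 0)
    (hA : DifferentiableAt ℝ A z) (hB : DifferentiableAt ℝ B z) (hC : DifferentiableAt ℝ C z)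
    (hD : DifferentiableAt ℝ D z) :
    pdy D z - pdx C z = 2 * (B z * D z - C z ^ 2) ∧ pdy C z - pdx B z = A z * D z - B z * C z ∧
      pdy B z - pdx A z = 2 * (A z * C z - B z ^ 2) := by
  obtain ⟨hχ₁, hχ₂⟩ := hχ_affine.compatibility hU hχ hz hA hB hC hD
  obtain ⟨hφ₁, hφ₂⟩ := hφ_affine.compatibility hU hφ hz hA hB hC hD
  obtain ⟨hE₂, hE₁⟩ := eq_zero_of_det_ne_zero hJ hχ₁ hφ₁
  obtain ⟨hE₃, -⟩ := eq_zero_of_det_ne_zero hJ hχ₂ hφ₂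
  exact ⟨sub_eq_zero.1 (neg_eq_zero.1 hE₁), sub_eq_zero.1 hE₂, sub_eq_zero.1 hE₃⟩

lemma gradient_const_mul_add_const_mul_ne_zero {z : ℝ × ℝ} (hχ : DifferentiableAt ℝ χ z)
    (hφ : DifferentiableAt ℝ φ z) (hJ : pdx χ z * pdy φ z - pdy χ z * pdx φ z ≠ 0) {a b : ℝ}
    (hab : (a, b) ≠ (0, 0)) :
    ¬(pdx (fun w => a * χ w + b * φ w) z = 0 ∧ pdy (fun w => a * χ w + b * φ w) z = 0) := by
  rw [pdx_const_mul_add_const_mul hχ hφ, pdy_const_mul_add_const_mul hχ hφ]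
  rintro ⟨hx, hy⟩
  obtain ⟨ha, hb⟩ := eq_zero_of_det_ne_zero (by rwa [mul_comm (pdx φ z)]) hx hy
  exact hab (by rw [ha, hb])

theorem deriv_deriv_eq_of_linear_relation (hU : IsOpen U) (hχ : AnalyticOnNhd ℝ χ U)
    (hφ : AnalyticOnNhd ℝ φ U) (hχ_affine : IsAffineFunctionOn A B C D χ U)
    (hφ_affine : IsAffineFunctionOn A B C D φ U) {y : ℝ → ℝ} {x : ℝ} (hxU : (x, y x) ∈ U)
    (hJ : pdx χ (x, y x) * pdy φ (x, y x) - pdy χ (x, y x) * pdx φ (x, y x) ≠ 0)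
    (hy : AnalyticAt ℝ y x) {a b k : ℝ} (hab : (a, b) ≠ (0, 0))
    (h_line : ∀ᶠ t in 𝓝 x, a * χ (t, y t) + b * φ (t, y t) = k) :
    deriv (deriv y) x = A (x, y x) * deriv y x ^ 3 + 3 * B (x, y x) * deriv y x ^ 2
      + 3 * C (x, y x) * deriv y x + D (x, y x) :=
  have hχ_x := hχ _ hxU
  have hφ_x := hφ _ hxU
  (hχ_affine.const_mul_add_const_mul hU hχ hφ hφ_affine a b).deriv_deriv_level_curve hxU
    ((analyticAt_const.mul hχ_x).add (analyticAt_const.mul hφ_x)) hy h_line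
    (gradient_const_mul_add_const_mul_ne_zero hχ_x.differentiableAt hφ_x.differentiableAt hJ hab)

end AffineFunctions

/-- Necessity of the linearizability conditions: if an area-preserving real-analytic
point transformation `(χ, φ)` maps the graphs of all solutions of `y'' = f(x,y,y')`
onto affine lines, then `f` is cubic in `y'` and its coefficients satisfy the
stated system of PDEs. -/
theorem stmt10 (U : Set (ℝ × ℝ)) (hU : IsOpen U)
    (χ φ : ℝ × ℝ → ℝ)
    (hχ : AnalyticOnNhd ℝ χ U) (hφ : AnalyticOnNhd ℝ φ U)
    (hJ : ∀ z ∈ U, pdx χ z * pdy φ z - pdy χ z * pdx φ z = 1)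
    (W : Set (ℝ × ℝ)) (hW : IsOpen W) (hWU : W ⊆ U)
    (f : ℝ × ℝ × ℝ → ℝ)
    (hf : AnalyticOnNhd ℝ f {z : ℝ × ℝ × ℝ | (z.1, z.2.1) ∈ W})
    (hline : ∀ I : Set ℝ, IsOpen I → I.OrdConnected →
      ∀ c : ℝ → ℝ, AnalyticOnNhd ℝ c I →
        (∀ x ∈ I, (x, c x) ∈ W) →
        (∀ x ∈ I, deriv (deriv c) x = f (x, c x, deriv c x)) →
        ∃ a b k : ℝ, (a, b) ≠ ((0 : ℝ), (0 : ℝ)) ∧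
          ∀ x ∈ I, a * χ (x, c x) + b * φ (x, c x) = k) :
    ∃ A B C D : ℝ × ℝ → ℝ,
      AnalyticOnNhd ℝ A W ∧ AnalyticOnNhd ℝ B W ∧
      AnalyticOnNhd ℝ C W ∧ AnalyticOnNhd ℝ D W ∧
      (∀ x y p : ℝ, (x, y) ∈ W → f (x, y, p) =
        A (x, y) * p ^ 3 + 3 * B (x, y) * p ^ 2 + 3 * C (x, y) * p + D (x, y)) ∧
      (∀ z ∈ W, pdy D z - pdx C z = 2 * (B z * D z - C z ^ 2)) ∧
      (∀ z ∈ W, pdy C z - pdx B z = A z * D z - B z * C z) ∧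
      (∀ z ∈ W, pdy B z - pdx A z = 2 * (A z * C z - B z ^ 2)) := by
  obtain ⟨A, B, C, D, ⟨hA, hB, hC, hD⟩, hχ_affine, hφ_affine⟩ :=
    exists_isAffineFunctionOn_of_jacobian_eq_one hU hχ hφ hJ
  have hJ_ne (z) (hz : z ∈ U) : pdx χ z * pdy φ z - pdy χ z * pdx φ z ≠ 0 := by simp [hJ z hz]
  have h_eqns (z) (hz : z ∈ W) :=
    coefficient_equations_of_isAffineFunctionOn hU hχ hφ hχ_affine hφ_affine (hWU hz)
      (hJ_ne z (hWU hz)) (hA z (hWU hz)).differentiableAt (hB z (hWU hz)).differentiableAt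
      (hC z (hWU hz)).differentiableAt (hD z (hWU hz)).differentiableAt
  refine ⟨A, B, C, D, hA.mono hWU, hB.mono hWU, hC.mono hWU, hD.mono hWU, fun x y p hxy => ?_,
    fun z hz => (h_eqns z hz).1, fun z hz => (h_eqns z hz).2.1, fun z hz => (h_eqns z hz).2.2⟩
  obtain ⟨c, hc, rfl, rfl, hode⟩ := exists_analyticAt_deriv_deriv_eq (hf (x, y, p) hxy)
  have hcW : ∀ᶠ t in 𝓝 x, (t, c t) ∈ W :=
    (continuousAt_id.prodMk hc.continuousAt).eventually_mem (hW.mem_nhds hxy)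
  obtain ⟨r, hr, hball⟩ :=
    Metric.eventually_nhds_iff_ball.1 (hc.eventually_analyticAt.and (hcW.and hode))
  obtain ⟨a, b, k, hab, hk⟩ := hline (Metric.ball x r) Metric.isOpen_ball
    (convex_ball x r).ordConnected c (fun t ht => (hball t ht).1) (fun t ht => (hball t ht).2.1)
    fun t ht => (hball t ht).2.2
  rw [← hode.self_of_nhds]
  exact deriv_deriv_eq_of_linear_relation hU hχ hφ hχ_affine hφ_affine (hWU hxy)
    (hJ_ne _ (hWU hxy)) hc hab (eventually_of_mem (Metric.ball_mem_nhds x hr) hk)
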